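/- Let s = i·√3 ∈ ℂ (a square root of −3). The derivation module D(𝒜_𝔄) of the central hyperplane arrangement 𝒜_𝔄 in ℂ⁴ with defining equation Q_𝔄 = x·y·z·w·(x+y)·(x+y+z−w)·((s−1)x−2y+(s−1)z)·(2y+(−s+1)z−2w) is not a free module over S = ℂ[x,y,z,w]. -/

import Mathlib

open MvPolynomial

noncomputable section

/-- The polynomial ring `S = ℂ[x,y,z,w]`, with `x = X 0`, `y = X 1`, `z = X 2`, `w = X 3`. -/
abbrev S4 : Type := MvPolynomial (Fin 4) ℂ

/-- The linear form `c₀·x + c₁·y + c₂·z + c₃·w` with coefficient vector `c`. -/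
noncomputable def linForm (c : Fin 4 → ℂ) : S4 := ∑ i, C (c i) * X i

/-- A polynomial derivation `θ = a₁∂ₓ + a₂∂_y + a₃∂_z + a₄∂_w` of `S` is identified with
its coefficient tuple `a : Fin 4 → S`; the linear map `derMap f` sends `a` to `θ(f)`. -/
noncomputable def derMap (f : S4) : (Fin 4 → S4) →ₗ[S4] S4 where
  toFun a := ∑ i, a i * pderiv i f
  map_add' a b := by simp [add_mul, Finset.sum_add_distrib]
  map_smul' c a := by simp [Finset.mul_sum, mul_assoc]

/-- The derivation module `D(𝒜)` of the central arrangement whose hyperplanes are the kernels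
of the linear forms `linForm (α H)`: all derivations `θ` with `θ(α_H) ∈ S·α_H` for every `H`. -/
noncomputable def derivModule {ι : Type} (α : ι → (Fin 4 → ℂ)) :
    Submodule S4 (Fin 4 → S4) :=
  ⨅ H, Submodule.comap (derMap (linForm (α H))) (Ideal.span {linForm (α H)})

end

/-- `s = i·√3`, a square root of `-3`. -/
noncomputable def s : ℂ := Complex.I * Real.sqrt 3

/-- The coefficient vectors of the eight linear factors of Q = xyzw(x+y)(x+y+z-w)((s-1)x-2y+(s-1)z)(2y+(-s+1)z-2w), defining the rigid Cynk–Szemberg octic arrangement 𝒜_𝔄 ⊂ ℙ³. -/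
noncomputable def AFrakA : Fin 8 → (Fin 4 → ℂ) :=
  ![![1, 0, 0, 0],
    ![0, 1, 0, 0],
    ![0, 0, 1, 0],
    ![0, 0, 0, 1],
    ![1, 1, 0, 0],
    ![1, 1, 1, -1],
    ![s-1, -2, s-1, 0],
    ![0, 2, -s+1, -2]]

lemma derMap_linForm (c : Fin 4 → ℂ) (θ : Fin 4 → S4) :
    derMap (linForm c) θ = ∑ i, C (c i) * θ i := by
  simp [derMap, linForm, pderiv_X, Pi.single_apply, mul_comm]

lemma mem_derivModule {ι : Type} {α : ι → Fin 4 → ℂ} {θ : Fin 4 → S4} :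
    θ ∈ derivModule α ↔ ∀ H, linForm (α H) ∣ ∑ i, C (α H i) * θ i := by
  simp [derivModule, Submodule.mem_iInf, Ideal.mem_span_singleton, derMap_linForm]

/-- The localization of `AFrakA` at the point `(1 : -1 : 0 : 0)`: the four planes `z`, `w`, `x + y`
and `x + y + z - w` of the arrangement that pass through it. -/
def localArrangement : Fin 4 → Fin 4 → ℂ :=
  ![![0, 0, 1, 0], ![0, 0, 0, 1], ![1, 1, 0, 0], ![1, 1, 1, -1]]

/-- A representative of the point at which `AFrakA` is localized. -/
def basePoint : Fin 4 → ℂ := ![1, -1, 0, 0]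

/-- The product of the linear forms of `AFrakA` that do not vanish at `basePoint`. -/
noncomputable def complementForm : S4 :=
  linForm (AFrakA 0) * linForm (AFrakA 1) * linForm (AFrakA 6) * linForm (AFrakA 7)

lemma mem_local_iff {θ : Fin 4 → S4} :
    θ ∈ derivModule localArrangement ↔
      X 2 ∣ θ 2 ∧ X 3 ∣ θ 3 ∧ (X 0 + X 1 : S4) ∣ θ 0 + θ 1 ∧
        (X 0 + X 1 + X 2 - X 3 : S4) ∣ θ 0 + θ 1 + θ 2 - θ 3 := by
  simp [mem_derivModule, Fin.forall_fin_succ, localArrangement, linForm, Fin.sum_univ_four,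
    sub_eq_add_neg]

lemma derivModule_le_local : derivModule AFrakA ≤ derivModule localArrangement := by
  intro θ hθ
  rw [mem_derivModule] at hθ ⊢
  intro H
  fin_cases H
  · exact hθ 2
  · exact hθ 3
  · exact hθ 4
  · exact hθ 5

lemma complementForm_smul_mem {θ : Fin 4 → S4} (hθ : θ ∈ derivModule localArrangement) :
    complementForm • θ ∈ derivModule AFrakA := by
  rw [mem_derivModule] at hθ ⊢
  intro H
  have key (c : Fin 4 → ℂ) : ∑ i, C (c i) * (complementForm • θ) i =
      complementForm * ∑ i, C (c i) * θ i := by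
    simp [Finset.mul_sum, mul_left_comm]
  rw [key]
  fin_cases H
  · exact Dvd.dvd.mul_right ⟨linForm (AFrakA 1) * linForm (AFrakA 6) * linForm (AFrakA 7),
      by simp [complementForm, mul_assoc]⟩ _
  · exact Dvd.dvd.mul_right ⟨linForm (AFrakA 0) * linForm (AFrakA 6) * linForm (AFrakA 7),
      by simp only [complementForm, Fin.mk_one]; ring⟩ _
  · exact Dvd.dvd.mul_left (hθ 0) _
  · exact Dvd.dvd.mul_left (hθ 1) _
  · exact Dvd.dvd.mul_left (hθ 2) _
  · exact Dvd.dvd.mul_left (hθ 3) _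
  · exact Dvd.dvd.mul_right ⟨linForm (AFrakA 0) * linForm (AFrakA 1) * linForm (AFrakA 7),
      by simp only [complementForm, Fin.reduceFinMk]; ring⟩ _
  · exact Dvd.dvd.mul_right ⟨linForm (AFrakA 0) * linForm (AFrakA 1) * linForm (AFrakA 6),
      by simp only [complementForm, Fin.reduceFinMk]; ring⟩ _

lemma s_add_one_ne_zero : s + 1 ≠ 0 := by
  intro h
  simpa [s] using congrArg Complex.re h

lemma eval_complementForm_ne_zero : eval basePoint complementForm ≠ 0 := by
  have h : eval basePoint complementForm = 2 * (s + 1) := by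
    simp [complementForm, linForm, AFrakA, basePoint, Fin.sum_univ_four]
    ring
  rw [h]
  exact mul_ne_zero two_ne_zero s_add_one_ne_zero

/-- Five combinations of Taylor coefficients of a derivation at `basePoint`. -/
noncomputable def taylorData : (Fin 4 → S4) →+ (Fin 5 → ℂ) where
  toFun θ :=
    ![eval basePoint (θ 0),
      eval basePoint (pderiv 3 (θ 3)),
      eval basePoint (pderiv 3 (pderiv 2 (θ 2))) - eval basePoint (pderiv 3 (pderiv 3 (θ 3))) / 2,
      eval basePoint (pderiv 1 (pderiv 2 (θ 2))) - eval basePoint (pderiv 1 (pderiv 3 (θ 3))),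
      eval basePoint (pderiv 3 (pderiv 1 (θ 0 + θ 1))) -
        eval basePoint (pderiv 3 (pderiv 3 (θ 3))) / 2]
  map_zero' := by
    ext i
    fin_cases i <;> simp
  map_add' θ η := by
    ext i
    fin_cases i <;> simp <;> ring

/-- On derivations of the localized arrangement, `taylorData` factors through the fibre at
`basePoint`. -/
lemma taylorData_smul (q : S4) {θ : Fin 4 → S4} (hθ : θ ∈ derivModule localArrangement) :
    taylorData (q • θ) = eval basePoint q • taylorData θ := by
  obtain ⟨⟨f, hf⟩, ⟨h, hh⟩, ⟨g, hg⟩, ⟨r, hr⟩⟩ := mem_local_iff.1 hθ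
  rw [hg, hf, hh] at hr
  have hfr : eval basePoint f = eval basePoint r := by
    simpa [basePoint, pderiv_X, Pi.single_apply] using
      congrArg (fun p => eval basePoint (pderiv 2 p)) hr
  have hgr : eval basePoint g = eval basePoint r := by
    simpa [basePoint, pderiv_X, Pi.single_apply] using
      congrArg (fun p => eval basePoint (pderiv 1 p)) hr
  have hhr : eval basePoint h = eval basePoint r := by
    simpa [basePoint, pderiv_X, Pi.single_apply] using
      congrArg (fun p => eval basePoint (pderiv 3 p)) hr
  ext i
  fin_cases i <;>
    simp only [taylorData, AddMonoidHom.coe_mk, ZeroHom.coe_mk, Pi.smul_apply, smul_eq_mul,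
      ← mul_add, hf, hh, hg] <;>
    simp [pderiv_X, basePoint] <;>
    simp only [basePoint] at hfr hgr hhr <;>
    simp only [hfr, hgr, hhr] <;> ring

/-- Derivations of the localized arrangement realizing the standard basis under `taylorData`. -/
noncomputable def localDerivation : Fin 5 → Fin 4 → S4 :=
  ![![1, -1, 0, 0],
    ![0, X 0 + X 1, X 2, X 3],
    ![0, -((X 0 + X 1) * X 2), X 2 * (X 3 - X 2), 0],
    ![0, -((X 0 + X 1) * X 2), X 2 * (X 0 + X 1), 0],
    ![0, -((X 0 + X 1) * (X 0 + X 1 + X 2 - X 3)), 0, 0]]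

lemma localDerivation_mem (i : Fin 5) : localDerivation i ∈ derivModule localArrangement := by
  rw [mem_local_iff]
  fin_cases i <;> simp [localDerivation]
  · exact ⟨-X 2, by ring⟩
  · exact ⟨0, by ring⟩

set_option maxHeartbeats 1000000 in
-- twenty-five entries are computed one by one
lemma taylorData_localDerivation (i : Fin 5) :
    taylorData (localDerivation i) = Pi.single i 1 := by
  fin_cases i <;> ext j <;> fin_cases j <;>
    simp [taylorData, localDerivation, basePoint, pderiv_X]

/-- The derivation module of 𝒜_𝔄 is not a free `S`-module. -/
theorem not_free_AFrakA : ¬ Module.Free S4 ↥(derivModule AFrakA) := by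
  intro hfree
  let b := Module.Free.chooseBasis S4 (derivModule AFrakA)
  have hli : LinearIndependent S4 fun i => (b i : Fin 4 → S4) :=
    b.linearIndependent.map' (derivModule AFrakA).subtype (Submodule.ker_subtype _)
  have : Finite (Module.Free.ChooseBasisIndex S4 (derivModule AFrakA)) := hli.finite
  have := Fintype.ofFinite (Module.Free.ChooseBasisIndex S4 (derivModule AFrakA))
  have hcard := hli.fintype_card_le_finrank
  let v := fun i => taylorData (b i)
  have hmem (θ : derivModule AFrakA) : taylorData θ ∈ Submodule.span ℂ (Set.range v) := by
    have hθ : (θ : Fin 4 → S4) = ∑ i, b.repr θ i • (b i : Fin 4 → S4) := by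
      refine (congrArg Subtype.val (b.sum_repr θ)).symm.trans ?_
      simp only [Submodule.coe_sum, Submodule.coe_smul]
    rw [hθ, map_sum]
    refine Submodule.sum_mem _ fun i _ => ?_
    rw [taylorData_smul _ (derivModule_le_local (b i).2)]
    exact Submodule.smul_mem _ _ (Submodule.subset_span ⟨i, rfl⟩)
  have htop : Submodule.span ℂ (Set.range v) = ⊤ := by
    rw [eq_top_iff, ← (Pi.basisFun ℂ (Fin 5)).span_eq, Submodule.span_le]
    rintro _ ⟨i, rfl⟩
    have h := hmem ⟨_, complementForm_smul_mem (localDerivation_mem i)⟩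
    rw [taylorData_smul _ (localDerivation_mem i), taylorData_localDerivation,
      Submodule.smul_mem_iff _ eval_complementForm_ne_zero] at h
    simpa using h
  have hrank := finrank_range_le_card (R := ℂ) v
  rw [Set.finrank, htop, finrank_top] at hrank
  simp only [Module.finrank_fin_fun] at hrank hcard
  omega
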